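/- Let q ≥ 3 and d ≥ 2, and set β_* = max{1 − q/(d+1), 0}. Suppose that for every α > 1, for all colours c₁, c₂ ∈ [q] and for all p^{(1)},…,p^{(d)} ∈ Ex_{c₂}(α), it holds that h_{c₁,c₂,β_*}(p^{(1)},…,p^{(d)}) < α^{1/d}. Then for every β ∈ (0,1) with β ≥ β_*, the q-state Potts model with parameter β has uniqueness on the infinite d-ary tree: for every colour c ∈ [q], limsup_{n→∞} max_{τ:Λ_{d,n}→[q]} |Pr_{𝕋_{d,n}}[σ(v_{d,n}) = c ∣ σ(Λ_{d,n}) = τ] − 1/q| = 0. -/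

import Mathlib

open Filter

/-- Weight of a configuration of the `q`-state Potts model with parameter `β`
on the `d`-ary tree of height `n`.  A vertex of the tree is a pair of a depth
`k ≤ n` and a path of length `k`; the parent of a vertex of depth `k+1` is
obtained by dropping the last step of its path.  The weight is
`β ^ (number of monochromatic edges)`. -/
noncomputable def treeWeight (q d n : ℕ) (β : ℝ)
    (σ : (Σ k : Fin (n + 1), (Fin k → Fin d)) → Fin q) : ℝ :=
  β ^ (Finset.univ.filter (fun p : Σ k : Fin n, (Fin (k + 1) → Fin d) =>
        σ ⟨p.1.succ, p.2⟩ = σ ⟨p.1.castSucc, fun i => p.2 i.castSucc⟩)).card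

/-- The conditional probability, under the Gibbs distribution of the `q`-state
Potts model with parameter `β` on the `d`-ary tree `𝕋_{d,n}` of height `n`,
that the root receives colour `c` given that the leaves (the depth-`n`
vertices) are coloured according to `τ`. -/
noncomputable def condRootProb (q d n : ℕ) (β : ℝ)
    (τ : (Fin n → Fin d) → Fin q) (c : Fin q) : ℝ :=
  (∑ σ ∈ Finset.univ.filter
      (fun σ : (Σ k : Fin (n + 1), (Fin k → Fin d)) → Fin q =>
        σ ⟨⟨0, n.succ_pos⟩, Fin.elim0⟩ = c ∧
          ∀ f : Fin n → Fin d, σ ⟨⟨n, n.lt_succ_self⟩, f⟩ = τ f),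
      treeWeight q d n β σ) /
  (∑ σ ∈ Finset.univ.filter
      (fun σ : (Σ k : Fin (n + 1), (Fin k → Fin d)) → Fin q =>
        ∀ f : Fin n → Fin d, σ ⟨⟨n, n.lt_succ_self⟩, f⟩ = τ f),
      treeWeight q d n β σ)

/-- `γ(q,β,d,n)`: the maximum, over boundary configurations `τ` and colours
`c₁, c₂`, of the ratio of conditional root marginals. -/
noncomputable def pottsGamma (q d : ℕ) (β : ℝ) (n : ℕ) : ℝ :=
  ⨆ τ : (Fin n → Fin d) → Fin q, ⨆ c₁ : Fin q, ⨆ c₂ : Fin q,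
    condRootProb q d n β τ c₁ / condRootProb q d n β τ c₂

/-- The function `g_{c₁,c₂,β}` of the two-step recursion. -/
noncomputable def gfun (q d : ℕ) (β : ℝ) (c₁ c₂ : Fin q) (p : Fin d → Fin q → ℝ) : ℝ :=
  ∏ k : Fin d,
    (1 - ((1 - β) * (p k c₁ - p k c₂)) /
      (β * p k c₂ + ∑ c ∈ Finset.univ.erase c₂, p k c))

/-- The function `h_{c₁,c₂,β}` of the two-step recursion. -/
noncomputable def hfun (q d : ℕ) (β : ℝ) (c₁ c₂ : Fin q) (p : Fin d → Fin q → ℝ) : ℝ :=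
  1 + ((1 - β) * (1 - gfun q d β c₁ c₂ p)) /
    (β + ∑ c ∈ Finset.univ.erase c₂, gfun q d β c c₂ p)

/-- `Δ_α`: probability vectors on `q` colours whose entries are within a
factor `α` of each other. -/
def simplexAlpha (q : ℕ) (α : ℝ) : Set (Fin q → ℝ) :=
  {p | (∀ i, 0 ≤ p i) ∧ (∑ i, p i) = 1 ∧ ∀ i j, p i ≤ α * p j}

/-- `M_{α,c₁,c₂,β}`: the maximum of `h_{c₁,c₂,β}` over `Δ_α^d`. -/
noncomputable def Mval (q d : ℕ) (α β : ℝ) (c₁ c₂ : Fin q) : ℝ :=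
  sSup ((hfun q d β c₁ c₂) '' {p | ∀ k, p k ∈ simplexAlpha q α})

/-- `Ex_c(α)`: vectors with entries in `{1, α}`, whose `c`-entry is `1`
and with at least one entry equal to `α`. -/
def exSet (q : ℕ) (c : Fin q) (α : ℝ) : Set (Fin q → ℝ) :=
  {p | (∀ c', p c' = 1 ∨ p c' = α) ∧ p c = 1 ∧ ∃ c', p c' = α}

/-- The function `f_u(d,β,x,y)` from the one-step analysis. -/
noncomputable def fU (d : ℕ) (β x y : ℝ) : ℝ :=
  (1 - (1 - β) * y) ^ d /
    ((1 - (1 - β) * y) ^ d +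
      2 * (1 - (1 - β) * x) ^ ((d : ℝ) / 2) *
        (1 - (1 - β) * (1 - x - y)) ^ ((d : ℝ) / 2))

/-- The function `f_ℓ(d,β,x,y)` from the one-step analysis. -/
noncomputable def fL (d : ℕ) (β x y : ℝ) : ℝ :=
  (1 - (1 - β) * x) ^ d /
    ((1 - (1 - β) * x) ^ d + (1 - (1 - β) * y) ^ d +
      (1 - (1 - β) * (1 - x - y)) ^ d)

/-- The pair of sequences `(u_n(d,β), ℓ_n(d,β))`, defined by
`u_0 = 1`, `ℓ_0 = 0`, `u_{n+1} = f_u(d,β,u_n,ℓ_n)`, `ℓ_{n+1} = f_ℓ(d,β,u_n,ℓ_n)`. -/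
noncomputable def ulSeq (d : ℕ) (β : ℝ) : ℕ → ℝ × ℝ
  | 0 => (1, 0)
  | n + 1 =>
      (fU d β (ulSeq d β n).1 (ulSeq d β n).2,
       fL d β (ulSeq d β n).1 (ulSeq d β n).2)

/-!
Let `Z τ c` be the partition function of the tree of height `n` with leaves coloured by `τ` and root
coloured by `c`. Splitting the tree at the root gives `Z τ = ∏ i, B *ᵥ Z (τ i)`, where `B` is the
interaction matrix of an edge and `τ i` is the restriction of `τ` to the `i`-th subtree. Hence
uniqueness means that, for each `α > 1`, the entries of `Z τ` are eventually within a factor `α` of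
each other, uniformly in `τ`.

Let `p k` be the partition functions two levels below, with `R = ∏ k, B *ᵥ p k`. The ratio
`(B *ᵥ R) c / (B *ᵥ R) c₀` is then `h_{c,c₀,β}(p)`. It is at most `K ≥ 1` when
`K * (B *ᵥ R) c₀ - (B *ᵥ R) c` is nonnegative, a combination of the entries of `R` with nonnegative
weights off `c₀`. Such a sign condition is inherited when `p k c₀` is raised, because this lowers
every `(B *ᵥ p k) c / (B *ᵥ p k) c₀`; and it is linear in each `p k`, so it only has to be checked
at the extreme points `Ex_{c₀}(α)` of the remaining box. There `h` is antitone in `β`, so the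
hypothesis at `β_*` suffices. As `Ex_{c₀}(α)` is finite and depends continuously on `α`, one
`K < L ^ (1 / d)` serves for all `α` near a given `L > 1`. The `d` children of a vertex then
contribute `K ^ d < L`, so two levels of recursion turn every factor near `L` into one below `L`,
and the infimum of the eventual factors cannot exceed `1`.
-/

open Finset Topology
open scoped Matrix

/-- Any `p` with coordinates in `S` reaches one with coordinates in `E` by updating one
coordinate at a time. -/
theorem forall_of_forall_update {κ V : Type*} [Finite κ] [DecidableEq κ] {E S : Set V}
    (hES : E ⊆ S) {P : (κ → V) → Prop}
    (hupdate : ∀ p k, (∀ j, p j ∈ S) → (∀ v ∈ E, P (Function.update p k v)) → P p)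
    (hE : ∀ p, (∀ k, p k ∈ E) → P p) {p : κ → V} (hp : ∀ k, p k ∈ S) : P p := by
  cases nonempty_fintype κ
  suffices H : ∀ (s : Finset κ) (p : κ → V), (∀ k, p k ∈ S) → (∀ k ∉ s, p k ∈ E) → P p from
    H univ p hp fun k hk => absurd (mem_univ k) hk
  intro s
  induction s using Finset.induction_on with
  | empty => exact fun p _ hpE => hE p fun k => hpE k (notMem_empty k)
  | insert k s _ ih =>
    refine fun p hpS hpE => hupdate p k hpS fun v hv => ih _
      ((Function.forall_update_iff p fun _ y => y ∈ S).2 ⟨hES hv, fun j _ => hpS j⟩)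
      ((Function.forall_update_iff p fun j y => j ∉ s → y ∈ E).2 ⟨fun _ => hv, fun j hjk hj => ?_⟩)
    exact hpE j (by simp [hjk, hj])

theorem exists_mem_Ioo_forall_eventually_lt {ι X Y : Type*} [Finite ι] [TopologicalSpace X]
    [LinearOrder Y] [TopologicalSpace Y] [OrderTopology Y] [DenselyOrdered Y]
    {f : ι → X → Y} {x : X} (hf : ∀ i, ContinuousAt (f i) x) {m M : Y} (hmM : m < M)
    (hM : ∀ i, f i x < M) : ∃ K ∈ Set.Ioo m M, ∀ᶠ y in 𝓝 x, ∀ i, f i y < K := by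
  have hK : ∀ᶠ K in 𝓝[<] M, ∀ i, f i x < K :=
    eventually_all.2 fun i => nhdsWithin_le_nhds (lt_mem_nhds (hM i))
  have := nhdsLT_neBot_of_exists_lt ⟨m, hmM⟩
  obtain ⟨K, hKi, hK⟩ := (hK.and (Ioo_mem_nhdsLT hmM)).exists
  exact ⟨K, hK, eventually_all.2 fun i => (hf i).eventually_lt_const (hKi i)⟩

theorem forall_gt_of_exists_lt_eventually {X : Type*} [ConditionallyCompleteLinearOrder X]
    [TopologicalSpace X] [OrderTopology X] {P : X → Prop} {l : X}
    (hmono : ∀ ⦃a b⦄, a ≤ b → P a → P b) (hne : ∃ a, P a)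
    (hstep : ∀ L > l, ∃ M < L, ∀ᶠ a in 𝓝 L, P a → P M) : ∀ a > l, P a := by
  by_contra! h
  obtain ⟨b, hlb, hb⟩ := h
  have hlb' : b ∈ lowerBounds {a | P a} := fun a ha => le_of_not_ge fun hab => hb (hmono hab ha)
  have hinf := isGLB_csInf (s := {a | P a}) hne ⟨b, hlb'⟩
  obtain ⟨M, hM, hev⟩ := hstep _ (hlb.trans_le (hinf.2 hlb'))
  obtain ⟨a, ha, haM⟩ := ((hinf.frequently_mem hne).and_eventually
    (hev.filter_mono nhdsWithin_le_nhds)).exists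
  exact hM.not_ge (hinf.1 (haM ha))

section PottsMatrix

variable {ι : Type*} [DecidableEq ι] [Fintype ι] {β : ℝ} {x : ι → ℝ}

/-- The interaction matrix of one edge of the Potts model: `β` on the diagonal and `1` elsewhere.
Multiplication by it turns the partition functions of a rooted tree, as a vector indexed by the
colour of the root, into those of the tree with an edge attached above the root. -/
def pottsMatrix (β : ℝ) : Matrix ι ι ℝ := .of fun c c' => if c' = c then β else 1

theorem pottsMatrix_mulVec (β : ℝ) (x : ι → ℝ) (c : ι) :
    (pottsMatrix β *ᵥ x) c = ∑ i, x i - (1 - β) * x c := by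
  simp only [Matrix.mulVec, dotProduct, pottsMatrix, Matrix.of_apply, ite_mul, one_mul,
    sum_ite, filter_eq', filter_ne', mem_univ, if_true, sum_singleton,
    ← add_sum_erase univ x (mem_univ c)]
  ring

theorem pottsMatrix_mulVec_eq_add_sum_erase (β : ℝ) (x : ι → ℝ) (c : ι) :
    (pottsMatrix β *ᵥ x) c = β * x c + ∑ i ∈ univ.erase c, x i := by
  rw [pottsMatrix_mulVec, ← add_sum_erase univ x (mem_univ c)]
  ring

theorem pottsMatrix_mulVec_le_sum (hβ : β ≤ 1) (hx : 0 ≤ x) (c : ι) :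
    (pottsMatrix β *ᵥ x) c ≤ ∑ i, x i := by
  rw [pottsMatrix_mulVec]
  linarith [mul_nonneg (sub_nonneg.2 hβ) (hx c)]

theorem mul_sum_le_pottsMatrix_mulVec (hβ : β ≤ 1) (hx : 0 ≤ x) (c : ι) :
    β * ∑ i, x i ≤ (pottsMatrix β *ᵥ x) c := by
  have hc : x c ≤ ∑ i, x i := single_le_sum (fun i _ => hx i) (mem_univ c)
  rw [pottsMatrix_mulVec]
  linarith [mul_le_mul_of_nonneg_left hc (sub_nonneg.2 hβ)]

theorem pottsMatrix_mulVec_pos [Nontrivial ι] (hβ : 0 ≤ β) (hx : ∀ i, 0 < x i) (c : ι) :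
    0 < (pottsMatrix β *ᵥ x) c := by
  rw [pottsMatrix_mulVec_eq_add_sum_erase]
  exact add_pos_of_nonneg_of_pos (mul_nonneg hβ (hx c).le)
    (sum_pos (fun i _ => hx i) univ_nontrivial.erase_nonempty)

theorem prod_pottsMatrix_mulVec_pos [Nontrivial ι] {κ : Type*} {s : Finset κ} {p : κ → ι → ℝ}
    (hβ : 0 ≤ β) (hp : ∀ k i, 0 < p k i) (c : ι) :
    0 < (∏ k ∈ s, pottsMatrix β *ᵥ p k) c := by
  rw [Finset.prod_apply]
  exact prod_pos fun k _ => pottsMatrix_mulVec_pos hβ (hp k) c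

theorem pottsMatrix_mulVec_update (β : ℝ) (x : ι → ℝ) (c₀ : ι) (m : ℝ) (c : ι) :
    (pottsMatrix β *ᵥ Function.update x c₀ m) c =
      (pottsMatrix β *ᵥ x) c - (if c = c₀ then β else 1) * (x c₀ - m) := by
  have hsum : ∑ i, Function.update x c₀ m i = ∑ i, x i - (x c₀ - m) := by
    rw [sum_update_of_mem (mem_univ c₀), ← sum_sdiff (subset_univ {c₀}), sum_singleton]
    ring
  rw [pottsMatrix_mulVec, pottsMatrix_mulVec, hsum]
  rcases eq_or_ne c c₀ with rfl | hc
  · rw [Function.update_self, if_pos rfl]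
    ring
  · rw [Function.update_of_ne hc, if_neg hc]
    ring

theorem pottsMatrix_mulVec_update_mul_le (hβ₀ : 0 ≤ β) (hβ₁ : β ≤ 1) (hx : 0 ≤ x) {c₀ : ι} {m : ℝ}
    (hm : m ≤ x c₀) (c : ι) :
    (pottsMatrix β *ᵥ Function.update x c₀ m) c * (pottsMatrix β *ᵥ x) c₀ ≤
      (pottsMatrix β *ᵥ x) c * (pottsMatrix β *ᵥ Function.update x c₀ m) c₀ := by
  have hle : β * (pottsMatrix β *ᵥ x) c ≤ (pottsMatrix β *ᵥ x) c₀ :=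
    (mul_le_mul_of_nonneg_left (pottsMatrix_mulVec_le_sum hβ₁ hx c) hβ₀).trans
      (mul_sum_le_pottsMatrix_mulVec hβ₁ hx c₀)
  rcases eq_or_ne c c₀ with rfl | hc
  · rw [mul_comm]
  · rw [pottsMatrix_mulVec_update, pottsMatrix_mulVec_update, if_neg hc, if_pos rfl]
    linarith [mul_le_mul_of_nonneg_right hle (sub_nonneg.2 hm)]

theorem dotProduct_mulVec_nonneg_of_update [Nontrivial ι] {m : ℝ} {w : ι → ℝ} {c₀ : ι}
    (hβ₀ : 0 ≤ β) (hβ₁ : β ≤ 1) (hw : ∀ c ≠ c₀, 0 ≤ w c)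
    (hx : ∀ i, 0 < x i) (hm : 0 < m) (hmx : m ≤ x c₀)
    (h : 0 ≤ w ⬝ᵥ pottsMatrix β *ᵥ Function.update x c₀ m) : 0 ≤ w ⬝ᵥ pottsMatrix β *ᵥ x := by
  set x' := Function.update x c₀ m
  have hx' : ∀ i, 0 < x' i :=
    (Function.forall_update_iff x fun _ t => 0 < t).2 ⟨hm, fun i _ => hx i⟩
  have hle : (pottsMatrix β *ᵥ x) c₀ * (w ⬝ᵥ pottsMatrix β *ᵥ x') ≤
      (pottsMatrix β *ᵥ x') c₀ * (w ⬝ᵥ pottsMatrix β *ᵥ x) := by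
    simp only [dotProduct, mul_sum, mul_left_comm _ (w _)]
    refine sum_le_sum fun c _ => ?_
    rcases eq_or_ne c c₀ with rfl | hc
    · rw [mul_comm ((pottsMatrix β *ᵥ x) c)]
    · refine mul_le_mul_of_nonneg_left ?_ (hw c hc)
      rw [mul_comm, mul_comm ((pottsMatrix β *ᵥ x') c₀)]
      exact pottsMatrix_mulVec_update_mul_le hβ₀ hβ₁ (fun i => (hx i).le) hmx c
  exact nonneg_of_mul_nonneg_right
    ((mul_nonneg (pottsMatrix_mulVec_pos hβ₀ hx c₀).le h).trans hle)
    (pottsMatrix_mulVec_pos hβ₀ hx' c₀)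

theorem pottsMatrix_mulVec_div_mono [Nontrivial ι] {β' : ℝ} (hβ : 0 ≤ β) (hle : β ≤ β')
    (hx : ∀ i, 0 < x i) {c c₀ : ι} (hc : x c₀ ≤ x c) :
    (pottsMatrix β *ᵥ x) c / (pottsMatrix β *ᵥ x) c₀ ≤
      (pottsMatrix β' *ᵥ x) c / (pottsMatrix β' *ᵥ x) c₀ := by
  rw [div_le_div_iff₀ (pottsMatrix_mulVec_pos hβ hx c₀)
    (pottsMatrix_mulVec_pos (hβ.trans hle) hx c₀)]
  have hsum : 0 ≤ ∑ i, x i := sum_nonneg fun i _ => (hx i).le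
  simp only [pottsMatrix_mulVec]
  linarith [mul_nonneg hsum (mul_nonneg (sub_nonneg.2 hle) (sub_nonneg.2 hc))]

theorem pottsMatrix_mulVec_le_of_le (hβ : β ≤ 1) {c c₀ : ι} (hc : x c₀ ≤ x c) :
    (pottsMatrix β *ᵥ x) c ≤ (pottsMatrix β *ᵥ x) c₀ := by
  rw [pottsMatrix_mulVec, pottsMatrix_mulVec]
  linarith [mul_le_mul_of_nonneg_left hc (sub_nonneg.2 hβ)]

end PottsMatrix

section RatioLE

variable {ι : Type*} {α α' : ℝ} {x : ι → ℝ}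

/-- The entries of `x` are positive and within a factor `α` of each other. This is the cone over
the set `simplexAlpha`; no normalisation is imposed, so that it applies to partition functions. -/
def RatioLE (α : ℝ) (x : ι → ℝ) : Prop := (∀ i, 0 < x i) ∧ ∀ i j, x i ≤ α * x j

theorem RatioLE.mono (hα : α ≤ α') (hx : RatioLE α x) : RatioLE α' x :=
  ⟨hx.1, fun i j => (hx.2 i j).trans (mul_le_mul_of_nonneg_right hα (hx.1 j).le)⟩

theorem RatioLE.one_le [Nonempty ι] (hx : RatioLE α x) : 1 ≤ α :=
  let ⟨i⟩ := ‹Nonempty ι›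
  (le_mul_iff_one_le_left (hx.1 i)).1 (hx.2 i i)

theorem RatioLE.prod {κ : Type*} {s : Finset κ} {a : κ → ℝ} {y : κ → ι → ℝ}
    (hy : ∀ k ∈ s, RatioLE (a k) (y k)) : RatioLE (∏ k ∈ s, a k) (∏ k ∈ s, y k) := by
  refine ⟨fun i => ?_, fun i j => ?_⟩
  · rw [Finset.prod_apply]
    exact prod_pos fun k hk => (hy k hk).1 i
  · rw [Finset.prod_apply, Finset.prod_apply, ← prod_mul_distrib]
    exact prod_le_prod (fun k hk => ((hy k hk).1 i).le) fun k hk => (hy k hk).2 i j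

variable [Fintype ι]

theorem RatioLE.pottsMatrix_mulVec [DecidableEq ι] {β : ℝ} (hβ₀ : 0 < β) (hβ₁ : β ≤ 1)
    (hx : 0 ≤ x) (hsum : 0 < ∑ i, x i) : RatioLE β⁻¹ (pottsMatrix β *ᵥ x) := by
  refine ⟨fun i => (mul_pos hβ₀ hsum).trans_le (mul_sum_le_pottsMatrix_mulVec hβ₁ hx i),
    fun i j => ?_⟩
  rw [le_inv_mul_iff₀ hβ₀]
  exact (mul_le_mul_of_nonneg_left (pottsMatrix_mulVec_le_sum hβ₁ hx i) hβ₀.le).trans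
    (mul_sum_le_pottsMatrix_mulVec hβ₁ hx j)

theorem RatioLE.abs_div_sum_sub_le [Nonempty ι] (hx : RatioLE α x) (i : ι) :
    |x i / ∑ j, x j - 1 / Fintype.card ι| ≤ (α - 1) / Fintype.card ι := by
  set S := ∑ j, x j
  set N : ℝ := (Fintype.card ι : ℝ)
  have hS : 0 < S := sum_pos (fun j _ => hx.1 j) univ_nonempty
  have hN : 0 < N := Nat.cast_pos.2 Fintype.card_pos
  have hα : 1 ≤ α := hx.one_le
  have hupper : N * x i ≤ α * S := by
    simpa [S, N, mul_sum] using sum_le_sum fun j (_ : j ∈ univ) => hx.2 i j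
  have hlower : S ≤ α * (N * x i) := by
    simpa [S, N, mul_left_comm] using sum_le_sum fun j (_ : j ∈ univ) => hx.2 j i
  have hgap : S - N * x i ≤ (α - 1) * S := by
    rcases le_total (N * x i) S with hle | hle
    · linarith [mul_le_mul_of_nonneg_left hle (sub_nonneg.2 hα)]
    · linarith [mul_nonneg (sub_nonneg.2 hα) hS.le]
  have habs : |N * x i - S| ≤ (α - 1) * S := abs_le.2 ⟨by linarith, by linarith⟩
  calc |x i / S - 1 / N| = |N * x i - S| / (S * N) := by
        rw [div_sub_div _ _ hS.ne' hN.ne', abs_div, abs_of_pos (mul_pos hS hN), mul_comm (x i),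
          mul_one]
    _ ≤ (α - 1) * S / (S * N) := by gcongr
    _ = (α - 1) / N := by field_simp

end RatioLE

section Extremal

variable {q : ℕ} {α β : ℝ} {c₀ : Fin q} {v x : Fin q → ℝ}

theorem one_le_of_mem_exSet (hα : 1 ≤ α) (hv : v ∈ exSet q c₀ α) (c : Fin q) : 1 ≤ v c := by
  rcases hv.1 c with h | h
  · exact h.ge
  · exact hα.trans h.ge

theorem RatioLE.of_mem_exSet (hα : 1 ≤ α) (hv : v ∈ exSet q c₀ α) : RatioLE α v := by
  have hone := one_le_of_mem_exSet hα hv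
  refine ⟨fun i => one_pos.trans_le (hone i), fun i j => ?_⟩
  have hle : v i ≤ α := by
    rcases hv.1 i with h | h
    · exact h.le.trans hα
    · exact h.le
  exact hle.trans (le_mul_of_one_le_right (one_pos.le.trans hα) (hone j))

theorem mem_exSet_iff_exists_piecewise (hα : α ≠ 1) :
    v ∈ exSet q c₀ α ↔
      ∃ s : Finset (Fin q), c₀ ∉ s ∧ s.Nonempty ∧ s.piecewise (fun _ => α) 1 = v := by
  constructor
  · rintro ⟨hv, hv₀, c', hc'⟩
    refine ⟨univ.filter fun c => v c = α, by simp [hv₀, hα.symm], ⟨c', by simp [hc']⟩, ?_⟩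
    ext c
    rcases hv c with h | h <;> simp [piecewise, h, hα.symm]
  · rintro ⟨s, hc₀, ⟨c', hc'⟩, rfl⟩
    refine ⟨fun c => ?_, by simp [hc₀], c', by simp [hc']⟩
    by_cases hc : c ∈ s <;> simp [hc]

/-- The sign of each weight tells which of the two admissible values lowers the product. -/
theorem exists_mem_exSet_dotProduct_le (w : Fin q → ℝ) (hx : ∀ i, x i ∈ Set.Icc 1 α)
    (hx₀ : x c₀ = 1) (hxα : ∃ c, x c = α) : ∃ v ∈ exSet q c₀ α, w ⬝ᵥ v ≤ w ⬝ᵥ x := by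
  have hchoice : ∀ i, ∃ t, (t = 1 ∨ t = α) ∧ (x i = 1 → t = 1) ∧ (x i = α → t = α) ∧
      w i * t ≤ w i * x i := fun i => by
    by_cases h1 : x i = 1
    · exact ⟨1, .inl rfl, fun _ => rfl, h1.symm.trans, by rw [h1]⟩
    by_cases h2 : x i = α
    · exact ⟨α, .inr rfl, fun h => absurd h h1, fun _ => rfl, by rw [h2]⟩
    rcases le_total 0 (w i) with hw | hw
    · exact ⟨1, .inl rfl, fun _ => rfl, fun h => absurd h h2,
        mul_le_mul_of_nonneg_left (hx i).1 hw⟩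
    · exact ⟨α, .inr rfl, fun h => absurd h h1, fun _ => rfl,
        mul_le_mul_of_nonpos_left (hx i).2 hw⟩
  choose v hv hv1 hvα hle using hchoice
  obtain ⟨c, hc⟩ := hxα
  exact ⟨v, ⟨hv, hv1 c₀ hx₀, c, hvα c hc⟩, sum_le_sum fun i _ => hle i⟩

/-- Lowering `x c₀` as far as the ratio bound allows puts `x` on a ray through the box with
entries in `[1, α]`. -/
theorem RatioLE.exists_smul_update_mem_Icc [Nontrivial (Fin q)] (hx : RatioLE α x) (c₀ : Fin q) :
    ∃ m, 0 < m ∧ m ≤ x c₀ ∧ (∀ i, (m⁻¹ • Function.update x c₀ m) i ∈ Set.Icc 1 α) ∧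
      ∃ c, (m⁻¹ • Function.update x c₀ m) c = α := by
  obtain ⟨c, hc, hmax⟩ := exists_max_image (univ.erase c₀) x univ_nontrivial.erase_nonempty
  have hα : 1 ≤ α := hx.one_le
  have hα₀ : 0 < α := one_pos.trans_le hα
  have hm : 0 < x c / α := div_pos (hx.1 c) hα₀
  have hmle : ∀ i, x c / α ≤ x i := fun i => (div_le_iff₀' hα₀).2 (hx.2 c i)
  have hαm : α * (x c / α) = x c := mul_div_cancel₀ _ hα₀.ne'
  refine ⟨x c / α, hm, hmle c₀, fun i => ?_, c, ?_⟩
  · rw [Pi.smul_apply, smul_eq_mul, Set.mem_Icc, inv_mul_eq_div, one_le_div hm, div_le_iff₀ hm, hαm]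
    rcases eq_or_ne i c₀ with rfl | hi
    · rw [Function.update_self]
      exact ⟨le_rfl, hmle c⟩
    · rw [Function.update_of_ne hi]
      exact ⟨hmle i, hmax i (mem_erase.2 ⟨hi, mem_univ i⟩)⟩
  · rw [Pi.smul_apply, smul_eq_mul, Function.update_of_ne (ne_of_mem_erase hc),
      inv_mul_eq_iff_eq_mul₀ hm.ne', mul_comm, hαm]

theorem dotProduct_mulVec_nonneg_of_exSet [Nontrivial (Fin q)] {w : Fin q → ℝ}
    (hβ₀ : 0 ≤ β) (hβ₁ : β ≤ 1) (hw : ∀ c ≠ c₀, 0 ≤ w c)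
    (h : ∀ v ∈ exSet q c₀ α, 0 ≤ w ⬝ᵥ pottsMatrix β *ᵥ v) (hx : RatioLE α x) :
    0 ≤ w ⬝ᵥ pottsMatrix β *ᵥ x := by
  obtain ⟨m, hm, hmx, hIcc, hα⟩ := hx.exists_smul_update_mem_Icc c₀
  refine dotProduct_mulVec_nonneg_of_update hβ₀ hβ₁ hw hx.1 hm hmx ?_
  obtain ⟨v, hv, hle⟩ := exists_mem_exSet_dotProduct_le (c₀ := c₀) (w ᵥ* pottsMatrix β) hIcc
    (by simp [hm.ne']) hα
  rw [← Matrix.dotProduct_mulVec, ← Matrix.dotProduct_mulVec, Matrix.mulVec_smul,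
    dotProduct_smul, smul_eq_mul] at hle
  exact nonneg_of_mul_nonneg_right ((h v hv).trans hle) (inv_pos.2 hm)

theorem dotProduct_prod_mulVec_nonneg_of_exSet [Nontrivial (Fin q)] {κ : Type*} [Fintype κ]
    {w : Fin q → ℝ} (hα : 1 ≤ α) (hβ₀ : 0 ≤ β) (hβ₁ : β ≤ 1) (hw : ∀ c ≠ c₀, 0 ≤ w c)
    (h : ∀ p : κ → Fin q → ℝ, (∀ k, p k ∈ exSet q c₀ α) → 0 ≤ w ⬝ᵥ ∏ k, pottsMatrix β *ᵥ p k)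
    {p : κ → Fin q → ℝ} (hp : ∀ k, RatioLE α (p k)) : 0 ≤ w ⬝ᵥ ∏ k, pottsMatrix β *ᵥ p k := by
  classical
  refine forall_of_forall_update (E := exSet q c₀ α) (S := {x | RatioLE α x})
    (P := fun p => 0 ≤ w ⬝ᵥ ∏ k, pottsMatrix β *ᵥ p k)
    (fun v hv => .of_mem_exSet hα hv) (fun p k hpS hpE => ?_) h hp
  set a : Fin q → ℝ := ∏ j ∈ univ.erase k, pottsMatrix β *ᵥ p j
  have hsplit : ∀ v, w ⬝ᵥ ∏ j, pottsMatrix β *ᵥ Function.update p k v j =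
      (w * a) ⬝ᵥ pottsMatrix β *ᵥ v := fun v => by
    rw [← prod_erase_mul _ _ (mem_univ k), Function.update_self,
      prod_congr rfl fun j hj => by rw [Function.update_of_ne (ne_of_mem_erase hj)]]
    simp only [dotProduct, Pi.mul_apply, mul_assoc, a]
  rw [← Function.update_eq_self k p, hsplit]
  refine dotProduct_mulVec_nonneg_of_exSet hβ₀ hβ₁ (fun c hc => mul_nonneg (hw c hc) ?_)
    (fun v hv => hsplit v ▸ hpE v hv) (hpS k)
  exact (prod_pottsMatrix_mulVec_pos hβ₀ (fun j => (hpS j).1) c).le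

end Extremal

section TwoStep

variable {q d : ℕ} {α β β' : ℝ} {c₀ : Fin q} {p : Fin d → Fin q → ℝ}

theorem gfun_eq_prod_div (c : Fin q) (hp : ∀ k, (pottsMatrix β *ᵥ p k) c₀ ≠ 0) :
    gfun q d β c c₀ p =
      ∏ k, (pottsMatrix β *ᵥ p k) c / (pottsMatrix β *ᵥ p k) c₀ := by
  refine prod_congr rfl fun k _ => ?_
  rw [← pottsMatrix_mulVec_eq_add_sum_erase, eq_div_iff (hp k), sub_mul,
    div_mul_cancel₀ _ (hp k), pottsMatrix_mulVec, pottsMatrix_mulVec]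
  ring

variable [Nontrivial (Fin q)]

theorem hfun_eq_div (hβ : 0 ≤ β) (c c₀ : Fin q) (hp : ∀ k i, 0 < p k i) :
    hfun q d β c c₀ p = (pottsMatrix β *ᵥ ∏ k, pottsMatrix β *ᵥ p k) c /
      (pottsMatrix β *ᵥ ∏ k, pottsMatrix β *ᵥ p k) c₀ := by
  set R := ∏ k, pottsMatrix β *ᵥ p k with hRdef
  have hR : ∀ i, 0 < R i := prod_pottsMatrix_mulVec_pos hβ hp
  have hg : ∀ i, gfun q d β i c₀ p = R i / R c₀ := fun i => by
    rw [gfun_eq_prod_div i fun k => (pottsMatrix_mulVec_pos hβ (hp k) c₀).ne', prod_div_distrib,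
      hRdef, Finset.prod_apply, Finset.prod_apply]
  have hden : β + ∑ i ∈ univ.erase c₀, gfun q d β i c₀ p = (pottsMatrix β *ᵥ R) c₀ / R c₀ := by
    simp_rw [hg]
    rw [pottsMatrix_mulVec_eq_add_sum_erase, ← sum_div, add_div,
      mul_div_cancel_right₀ _ (hR c₀).ne']
  have hR₀ := (hR c₀).ne'
  have hBR₀ := (pottsMatrix_mulVec_pos hβ hR c₀).ne'
  rw [hfun, hden, hg]
  field_simp
  rw [pottsMatrix_mulVec, pottsMatrix_mulVec]
  ring

theorem gfun_pos (hβ : 0 ≤ β) (hp : ∀ k i, 0 < p k i) (c c₀ : Fin q) : 0 < gfun q d β c c₀ p := by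
  have hpos := fun k => pottsMatrix_mulVec_pos hβ (hp k)
  rw [gfun_eq_prod_div c fun k => (hpos k c₀).ne']
  exact prod_pos fun k _ => div_pos (hpos k c) (hpos k c₀)

theorem gfun_mono (hβ : 0 ≤ β) (hle : β ≤ β') (hp : ∀ k i, 0 < p k i) {c : Fin q}
    (hc : ∀ k, p k c₀ ≤ p k c) : gfun q d β c c₀ p ≤ gfun q d β' c c₀ p := by
  have hpos := fun k => pottsMatrix_mulVec_pos hβ (hp k)
  rw [gfun_eq_prod_div c fun k => (hpos k c₀).ne',
    gfun_eq_prod_div c fun k => (pottsMatrix_mulVec_pos (hβ.trans hle) (hp k) c₀).ne']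
  exact prod_le_prod (fun k _ => (div_pos (hpos k c) (hpos k c₀)).le)
    fun k _ => pottsMatrix_mulVec_div_mono hβ hle (hp k) (hc k)

theorem gfun_le_one (hβ₀ : 0 ≤ β) (hβ₁ : β ≤ 1) (hp : ∀ k i, 0 < p k i) {c : Fin q}
    (hc : ∀ k, p k c₀ ≤ p k c) : gfun q d β c c₀ p ≤ 1 := by
  have hpos := fun k => pottsMatrix_mulVec_pos hβ₀ (hp k)
  rw [gfun_eq_prod_div c fun k => (hpos k c₀).ne']
  exact prod_le_one (fun k _ => (div_pos (hpos k c) (hpos k c₀)).le)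
    fun k _ => (div_le_one (hpos k c₀)).2 (pottsMatrix_mulVec_le_of_le hβ₁ (hc k))

theorem hfun_anti (hβ : 0 ≤ β) (hle : β ≤ β') (hβ' : β' ≤ 1) (hp : ∀ k i, 0 < p k i)
    (hmin : ∀ k c, p k c₀ ≤ p k c) (c : Fin q) : hfun q d β' c c₀ p ≤ hfun q d β c c₀ p := by
  have hg_mono := fun c => gfun_mono hβ hle hp fun k => hmin k c
  have hg_one : gfun q d β' c c₀ p ≤ 1 := gfun_le_one (hβ.trans hle) hβ' hp fun k => hmin k c
  have hsum_pos : 0 < ∑ c ∈ univ.erase c₀, gfun q d β c c₀ p :=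
    sum_pos (fun c _ => gfun_pos hβ hp c c₀) univ_nontrivial.erase_nonempty
  rw [hfun, hfun]
  refine add_le_add_right (div_le_div₀ ?_ ?_ ?_ ?_) 1
  · exact mul_nonneg (by linarith) (by linarith [hg_mono c])
  · exact mul_le_mul (by linarith) (by linarith [hg_mono c]) (by linarith) (by linarith)
  · exact add_pos_of_nonneg_of_pos hβ hsum_pos
  · exact add_le_add hle (sum_le_sum fun c _ => hg_mono c)

theorem RatioLE.pottsMatrix_mulVec_prod (hα : 1 ≤ α) (hβ₀ : 0 ≤ β) (hβ₁ : β ≤ 1) {K : ℝ}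
    (hK : 1 ≤ K)
    (hEx : ∀ c c₀ : Fin q, ∀ p : Fin d → Fin q → ℝ, (∀ k, p k ∈ exSet q c₀ α) →
      hfun q d β c c₀ p ≤ K)
    (hp : ∀ k, RatioLE α (p k)) : RatioLE K (pottsMatrix β *ᵥ ∏ k, pottsMatrix β *ᵥ p k) := by
  have hprod_pos {p : Fin d → Fin q → ℝ} (hp : ∀ k, RatioLE α (p k)) :=
    pottsMatrix_mulVec_pos hβ₀ (prod_pottsMatrix_mulVec_pos (s := univ) hβ₀ fun k => (hp k).1)
  refine ⟨hprod_pos hp, fun c c₀ => ?_⟩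
  set w : Fin q → ℝ := K • pottsMatrix β c₀ - pottsMatrix β c with hw_def
  have hw_dot : ∀ y, w ⬝ᵥ y = K * (pottsMatrix β *ᵥ y) c₀ - (pottsMatrix β *ᵥ y) c := fun y => by
    rw [hw_def, sub_dotProduct, smul_dotProduct]
    rfl
  have hw : ∀ i ≠ c₀, 0 ≤ w i := fun i hi => by
    simp only [hw_def, pottsMatrix, Pi.sub_apply, Pi.smul_apply, Matrix.of_apply, if_neg hi,
      smul_eq_mul, mul_one]
    split_ifs <;> linarith
  rw [← sub_nonneg, ← hw_dot]
  refine dotProduct_prod_mulVec_nonneg_of_exSet hα hβ₀ hβ₁ hw (fun v hv => ?_) hp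
  have hvα : ∀ k, RatioLE α (v k) := fun k => .of_mem_exSet hα (hv k)
  rw [hw_dot, sub_nonneg, ← div_le_iff₀ (hprod_pos hvα c₀),
    ← hfun_eq_div hβ₀ c c₀ fun k => (hvα k).1]
  exact hEx c c₀ v hv

end TwoStep

section UniformBound

variable {q d : ℕ} [Nontrivial (Fin q)] {β L : ℝ}

theorem continuousAt_gfun (hβ : 0 ≤ β) (c c₀ : Fin q) {p : Fin d → Fin q → ℝ}
    (hp : ∀ k i, 0 < p k i) : ContinuousAt (gfun q d β c c₀) p := by
  have hne (k : Fin d) : β * p k c₀ + ∑ i ∈ univ.erase c₀, p k i ≠ 0 := by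
    rw [← pottsMatrix_mulVec_eq_add_sum_erase]
    exact (pottsMatrix_mulVec_pos hβ (hp k) c₀).ne'
  unfold gfun
  fun_prop (disch := exact hne _)

theorem continuousAt_hfun (hβ : 0 ≤ β) (c c₀ : Fin q) {p : Fin d → Fin q → ℝ}
    (hp : ∀ k i, 0 < p k i) : ContinuousAt (hfun q d β c c₀) p := by
  have hg := fun i => continuousAt_gfun hβ i c₀ hp
  have hne : β + ∑ i ∈ univ.erase c₀, gfun q d β i c₀ p ≠ 0 :=
    (add_pos_of_nonneg_of_pos hβ (sum_pos (fun i _ => gfun_pos hβ hp i c₀)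
      univ_nontrivial.erase_nonempty)).ne'
  unfold hfun
  fun_prop (disch := exact hne)

theorem exists_eventually_hfun_le (hd : d ≠ 0) (hβ : 0 ≤ β) (hL : 1 < L)
    (hcond : ∀ c c₀ : Fin q, ∀ p : Fin d → Fin q → ℝ, (∀ k, p k ∈ exSet q c₀ L) →
      hfun q d β c c₀ p < L ^ (1 / (d : ℝ))) :
    ∃ K, 1 ≤ K ∧ K ^ d < L ∧ ∀ᶠ α in 𝓝 L, ∀ c c₀ : Fin q, ∀ p : Fin d → Fin q → ℝ,
      (∀ k, p k ∈ exSet q c₀ α) → hfun q d β c c₀ p ≤ K := by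
  let Pattern := {s : Fin q × Fin q × (Fin d → Finset (Fin q)) //
    ∀ k, s.2.1 ∉ s.2.2 k ∧ (s.2.2 k).Nonempty}
  let vec (s : Pattern) (α : ℝ) (k : Fin d) : Fin q → ℝ := (s.1.2.2 k).piecewise (fun _ => α) 1
  have hvec (s : Pattern) (k : Fin d) : vec s L k ∈ exSet q s.1.2.1 L :=
    (mem_exSet_iff_exists_piecewise hL.ne').2 ⟨_, (s.2 k).1, (s.2 k).2, rfl⟩
  have hcont (s : Pattern) : Continuous (vec s) := by
    refine continuous_pi fun k => continuous_pi fun c => ?_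
    by_cases hc : c ∈ s.1.2.2 k
    · simpa [vec, hc] using continuous_id'
    · simpa [vec, hc] using continuous_const
  have hhfun (s : Pattern) : ContinuousAt (fun α => hfun q d β s.1.1 s.1.2.1 (vec s α)) L :=
    ContinuousAt.comp (g := hfun q d β s.1.1 s.1.2.1) (continuousAt_hfun hβ s.1.1 s.1.2.1 fun k =>
      (RatioLE.of_mem_exSet hL.le (hvec s k)).1) (hcont s).continuousAt
  obtain ⟨K, ⟨hK₁, hKL⟩, hev⟩ := exists_mem_Ioo_forall_eventually_lt hhfun
    (Real.one_lt_rpow hL (by positivity)) fun s => hcond _ _ _ (hvec s)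
  refine ⟨K, hK₁.le, ?_, ?_⟩
  · calc K ^ d < (L ^ (1 / (d : ℝ))) ^ d := pow_lt_pow_left₀ hKL (one_pos.le.trans hK₁.le) hd
      _ = L := by rw [one_div, Real.rpow_inv_natCast_pow (one_pos.le.trans hL.le) hd]
  · filter_upwards [hev, lt_mem_nhds hL] with α hα hα₁ c c₀ p hp
    choose s hs₀ hs hsp using fun k => (mem_exSet_iff_exists_piecewise hα₁.ne').1 (hp k)
    obtain rfl : _ = p := funext hsp
    exact (hα ⟨(c, c₀, s), fun k => ⟨hs₀ k, hs k⟩⟩).le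

end UniformBound

section Tree

/-- The vertices of the `d`-ary tree of height `n`, encoded as in `treeWeight`. -/
abbrev TreeVertex (d n : ℕ) : Type := Σ k : Fin (n + 1), (Fin k → Fin d)

/-- The edges of the `d`-ary tree of height `n`, indexed by their lower endpoints. -/
abbrev TreeEdge (d n : ℕ) : Type := Σ k : Fin n, (Fin (k + 1) → Fin d)

variable {q d n : ℕ}

/-- The root of the `d`-ary tree of height `n`. -/
def TreeVertex.root (d n : ℕ) : TreeVertex d n := ⟨⟨0, n.succ_pos⟩, Fin.elim0⟩

/-- The leaf of the `d`-ary tree of height `n` at the end of the path `f`. -/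
def TreeVertex.leaf (f : Fin n → Fin d) : TreeVertex d n := ⟨⟨n, n.lt_succ_self⟩, f⟩

/-- The vertex `v` of the subtree hanging from the `i`-th child of the root. -/
def TreeVertex.inSubtree (i : Fin d) (v : TreeVertex d n) : TreeVertex d (n + 1) :=
  ⟨v.1.succ, Fin.cons (α := fun _ => Fin d) i v.2⟩

/-- The leaf colouring `τ` restricted to the subtree hanging from the `i`-th child of the root. -/
def subtreeBoundary (τ : (Fin (n + 1) → Fin d) → Fin q) (i : Fin d) (f : Fin n → Fin d) : Fin q :=
  τ (Fin.cons (α := fun _ => Fin d) i f)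

/-- A vertex of the tree of height `n + 1` is the root or lies in one of the `d` subtrees. -/
def treeVertexEquiv (d n : ℕ) : Option (Fin d × TreeVertex d n) ≃ TreeVertex d (n + 1) where
  toFun v := v.elim (.root d (n + 1)) fun v => .inSubtree v.1 v.2
  invFun v := Fin.cases (motive := fun k => (Fin k → Fin d) → Option (Fin d × TreeVertex d n))
    (fun _ => none) (fun k f => some (f (0 : Fin (k + 1)), ⟨k, Fin.tail (α := fun _ => Fin d) f⟩))
    v.1 v.2
  left_inv v := by
    rcases v with _ | ⟨i, v⟩ <;> rfl
  right_inv := by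
    rintro ⟨k, f⟩
    induction k using Fin.cases with
    | zero => exact Sigma.ext rfl (heq_of_eq (funext fun i => i.elim0))
    | succ k => exact Sigma.ext rfl (heq_of_eq (Fin.cons_self_tail (α := fun _ => Fin d) f))

/-- An edge of the tree of height `n + 1` is incident to the root or lies in one of the `d`
subtrees. -/
def treeEdgeEquiv (d n : ℕ) : Fin d ⊕ Fin d × TreeEdge d n ≃ TreeEdge d (n + 1) where
  toFun := Sum.elim (fun i => ⟨0, fun _ => i⟩)
    fun e => ⟨e.2.1.succ, Fin.cons (α := fun _ => Fin d) e.1 e.2.2⟩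
  invFun e := Fin.cases
    (motive := fun k => (Fin (k + 1) → Fin d) → Fin d ⊕ Fin d × TreeEdge d n)
    (fun f => .inl (f 0)) (fun k f => .inr (f 0, ⟨k, Fin.tail (α := fun _ => Fin d) f⟩)) e.1 e.2
  left_inv e := by
    rcases e with i | ⟨i, e⟩ <;> rfl
  right_inv := by
    rintro ⟨k, f⟩
    induction k using Fin.cases with
    | zero =>
      refine Sigma.ext rfl (heq_of_eq (funext fun i => ?_))
      exact congrArg f (Subsingleton.elim (α := Fin 1) 0 i)
    | succ k => exact Sigma.ext rfl (heq_of_eq (Fin.cons_self_tail (α := fun _ => Fin d) f))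

/-- A configuration on the tree of height `n + 1` is a root colour together with configurations
on the `d` subtrees. -/
def treeConfigEquiv (q d n : ℕ) :
    (TreeVertex d (n + 1) → Fin q) ≃ Fin q × (Fin d → TreeVertex d n → Fin q) :=
  ((treeVertexEquiv d n).arrowCongr (.refl _)).symm.trans <|
    (Equiv.piOptionEquivProd (β := fun _ => Fin q)).trans <|
      (Equiv.refl _).prodCongr (Equiv.curry _ _ _)

theorem treeWeight_eq_prod (β : ℝ) (σ : TreeVertex d n → Fin q) :
    treeWeight q d n β σ = ∏ e : TreeEdge d n,
      pottsMatrix β (σ ⟨e.1.castSucc, fun i => e.2 i.castSucc⟩) (σ ⟨e.1.succ, e.2⟩) := by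
  simp only [treeWeight, pottsMatrix, Matrix.of_apply]
  rw [prod_ite, prod_const, prod_const_one, mul_one]

theorem treeWeight_succ (β : ℝ) (σ : TreeVertex d (n + 1) → Fin q) :
    treeWeight q d (n + 1) β σ = ∏ i,
      (pottsMatrix β (σ (.root d (n + 1))) (σ (.inSubtree i (.root d n))) *
        treeWeight q d n β fun v => σ (.inSubtree i v)) := by
  simp only [treeWeight_eq_prod]
  rw [← (treeEdgeEquiv d n).prod_comp, Fintype.prod_sum_type, Fintype.prod_prod_type,
    prod_mul_distrib]
  congr 1
  · refine prod_congr rfl fun i _ => ?_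
    congr 2
    · exact Sigma.ext rfl (heq_of_eq (funext fun j => j.elim0))
    · refine Sigma.ext rfl (heq_of_eq (funext fun j => ?_))
      exact Fin.cases rfl (fun j => j.elim0) j
  · refine prod_congr rfl fun i _ => prod_congr rfl fun e _ => ?_
    congr 2
    refine Sigma.ext rfl (heq_of_eq (funext fun j => ?_))
    exact Fin.cases rfl (fun j => rfl) j

/-- The partition function of the `d`-ary tree of height `n` with leaves coloured by `τ`, as a
vector indexed by the colour of the root. -/
noncomputable def treePartition (β : ℝ) (τ : (Fin n → Fin d) → Fin q) (c : Fin q) : ℝ :=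
  ∑ σ : TreeVertex d n → Fin q with σ (.root d n) = c ∧ ∀ f, σ (.leaf f) = τ f,
    treeWeight q d n β σ

theorem sum_mul_treePartition (β : ℝ) (τ : (Fin n → Fin d) → Fin q) (w : Fin q → ℝ) :
    ∑ c, w c * treePartition β τ c =
      ∑ σ : TreeVertex d n → Fin q with ∀ f, σ (.leaf f) = τ f,
        w (σ (.root d n)) * treeWeight q d n β σ := by
  rw [← sum_fiberwise _ fun σ : TreeVertex d n → Fin q => σ (.root d n)]
  refine sum_congr rfl fun c _ => ?_
  rw [treePartition, mul_sum, filter_filter]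
  refine sum_congr (by simp only [and_comm]) fun σ hσ => ?_
  rw [(mem_filter.1 hσ).2.2]

theorem condRootProb_eq_div (β : ℝ) (τ : (Fin n → Fin d) → Fin q) (c : Fin q) :
    condRootProb q d n β τ c = treePartition β τ c / ∑ c', treePartition β τ c' := by
  have hden := sum_mul_treePartition β τ 1
  simp only [Pi.one_apply, one_mul] at hden
  rw [hden]
  rfl

theorem treePartition_zero (β : ℝ) (τ : (Fin 0 → Fin d) → Fin q) :
    treePartition β τ = Pi.single (τ default) 1 := by
  ext c
  have hvertex (v : TreeVertex d 0) : v = .root d 0 := by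
    obtain ⟨k, f⟩ := v
    obtain rfl := Subsingleton.elim (0 : Fin 1) k
    exact Sigma.ext rfl (heq_of_eq (funext fun i => i.elim0))
  let e : (TreeVertex d 0 → Fin q) ≃ Fin q :=
    @Equiv.funUnique _ _ ⟨⟨.root d 0⟩, hvertex⟩
  calc treePartition β τ c = ∑ c', if c' = c ∧ c' = τ default then 1 else 0 := by
        rw [treePartition, sum_filter]
        refine Fintype.sum_equiv e _ _ fun σ => if_congr (and_congr_right' ?_) ?_ rfl
        · rw [Unique.forall_iff, hvertex (.leaf default)]
          rfl
        · simp [treeWeight]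
    _ = (Pi.single (τ default) 1 : Fin q → ℝ) c := by
        simp [ite_and, Pi.single_apply]

theorem treePartition_succ (β : ℝ) (τ : (Fin (n + 1) → Fin d) → Fin q) :
    treePartition β τ = ∏ i, pottsMatrix β *ᵥ treePartition β (subtreeBoundary τ i) := by
  ext c
  have hboundary (σ : TreeVertex d (n + 1) → Fin q) : (∀ f, σ (.leaf f) = τ f) ↔
      ∀ i f, σ (.inSubtree i (.leaf f)) = subtreeBoundary τ i f :=
    Fin.forall_fin_succ_pi (α := fun _ => Fin d)
  calc treePartition β τ c
      = ∑ σ : Fin q × (Fin d → TreeVertex d n → Fin q),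
          if σ.1 = c ∧ ∀ i f, σ.2 i (.leaf f) = subtreeBoundary τ i f then
            ∏ i, pottsMatrix β σ.1 (σ.2 i (.root d n)) * treeWeight q d n β (σ.2 i) else 0 := by
        rw [treePartition, sum_filter, ← (treeConfigEquiv q d n).sum_comp]
        exact sum_congr rfl fun σ _ =>
          if_congr (and_congr_right' (hboundary σ)) (treeWeight_succ β σ) rfl
    _ = ∑ σ : Fin d → TreeVertex d n → Fin q,
          if ∀ i f, σ i (.leaf f) = subtreeBoundary τ i f then
            ∏ i, pottsMatrix β c (σ i (.root d n)) * treeWeight q d n β (σ i) else 0 := by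
        rw [Fintype.sum_prod_type_right]
        simp only [ite_and, sum_ite_eq', mem_univ, if_true]
    _ = (∏ i, pottsMatrix β *ᵥ treePartition β (subtreeBoundary τ i)) c := by
        simp only [Finset.prod_apply, Matrix.mulVec, dotProduct, sum_mul_treePartition, sum_filter,
          prod_univ_sum, Fintype.piFinset_univ, prod_ite_zero, mem_univ, true_imp_iff]

end Tree

section RatioBound

variable {q d n : ℕ} {α β β₀ : ℝ}

theorem ratioLE_treePartition_of_forall_subtree {τ : (Fin (n + 1) → Fin d) → Fin q}
    (h : ∀ i, RatioLE α (pottsMatrix β *ᵥ treePartition β (subtreeBoundary τ i))) :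
    RatioLE (α ^ d) (treePartition β τ) := by
  rw [treePartition_succ]
  simpa only [Finset.prod_const, card_univ, Fintype.card_fin] using
    RatioLE.prod (s := univ) fun i _ => h i

theorem ratioLE_treePartition_succ (hβ₀ : 0 < β) (hβ₁ : β ≤ 1)
    (τ : (Fin (n + 1) → Fin d) → Fin q) : RatioLE (β⁻¹ ^ d) (treePartition β τ) := by
  induction n with
  | zero =>
    refine ratioLE_treePartition_of_forall_subtree fun i => .pottsMatrix_mulVec hβ₀ hβ₁ ?_ ?_
    · rw [treePartition_zero]
      exact Pi.single_nonneg.2 zero_le_one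
    · simp [treePartition_zero]
  | succ n ih =>
    exact ratioLE_treePartition_of_forall_subtree fun i =>
      .pottsMatrix_mulVec hβ₀ hβ₁ (fun c => ((ih _).1 c).le)
        (sum_pos (fun c _ => (ih _).1 c) ⟨τ fun _ => i, mem_univ _⟩)

theorem ratioLE_treePartition_add_two [Nontrivial (Fin q)] (hα : 1 ≤ α) (hβ₀ : 0 ≤ β)
    (hβ₁ : β ≤ 1) {K : ℝ} (hK : 1 ≤ K)
    (hEx : ∀ c c₀ : Fin q, ∀ p : Fin d → Fin q → ℝ, (∀ k, p k ∈ exSet q c₀ α) →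
      hfun q d β c c₀ p ≤ K)
    (hτ : ∀ τ : (Fin n → Fin d) → Fin q, RatioLE α (treePartition β τ))
    (τ : (Fin (n + 2) → Fin d) → Fin q) : RatioLE (K ^ d) (treePartition β τ) := by
  refine ratioLE_treePartition_of_forall_subtree fun i => ?_
  rw [treePartition_succ]
  exact .pottsMatrix_mulVec_prod hα hβ₀ hβ₁ hK hEx fun k => hτ _

theorem eventually_ratioLE_treePartition (hq : 2 ≤ q) (hd : d ≠ 0) (hβ₀ : 0 ≤ β₀) (hle : β₀ ≤ β)
    (hβ : 0 < β) (hβ₁ : β ≤ 1)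
    (hcond : ∀ α : ℝ, 1 < α → ∀ c c₀ : Fin q, ∀ p : Fin d → Fin q → ℝ,
      (∀ k, p k ∈ exSet q c₀ α) → hfun q d β₀ c c₀ p < α ^ (1 / (d : ℝ))) :
    ∀ α > 1, ∀ᶠ n in atTop, ∀ τ : (Fin n → Fin d) → Fin q, RatioLE α (treePartition β τ) := by
  have : Nontrivial (Fin q) := Fin.nontrivial_iff_two_le.2 hq
  refine forall_gt_of_exists_lt_eventually ?_ ?_ fun L hL => ?_
  · exact fun a b hab h => h.mono fun n hn τ => (hn τ).mono hab
  · refine ⟨β⁻¹ ^ d, ?_⟩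
    rw [← map_add_atTop_eq_nat 1, eventually_map]
    exact .of_forall fun n τ => ratioLE_treePartition_succ hβ hβ₁ τ
  · obtain ⟨K, hK₁, hKL, hK⟩ := exists_eventually_hfun_le hd hβ₀ hL (hcond L hL)
    refine ⟨K ^ d, hKL, ?_⟩
    filter_upwards [hK, lt_mem_nhds hL] with α hα hα₁ hn
    have hEx (c c₀ : Fin q) (p : Fin d → Fin q → ℝ) (hp : ∀ k, p k ∈ exSet q c₀ α) :
        hfun q d β c c₀ p ≤ K := by
      refine le_trans (hfun_anti hβ₀ hle hβ₁ (fun k => (RatioLE.of_mem_exSet hα₁.le (hp k)).1)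
        (fun k i => ?_) c) (hα c c₀ p hp)
      rw [(hp k).2.1]
      exact one_le_of_mem_exSet hα₁.le (hp k) i
    rw [← map_add_atTop_eq_nat 2, eventually_map]
    exact hn.mono fun n hn => ratioLE_treePartition_add_two hα₁.le hβ.le hβ₁ hK₁ hEx hn

end RatioBound

theorem potts_uniqueness_of_condition_general {q d : ℕ} (hq : 2 ≤ q) (hd : d ≠ 0) {β₀ β : ℝ}
    (hβ₀ : 0 ≤ β₀) (hle : β₀ ≤ β) (hβ : 0 < β) (hβ₁ : β ≤ 1)
    (hcond : ∀ α : ℝ, 1 < α → ∀ c₁ c₂ : Fin q, ∀ p : Fin d → Fin q → ℝ,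
      (∀ k, p k ∈ exSet q c₂ α) → hfun q d β₀ c₁ c₂ p < α ^ (1 / (d : ℝ))) (c : Fin q) :
    Tendsto (fun n => ⨆ τ : (Fin n → Fin d) → Fin q, |condRootProb q d n β τ c - 1 / (q : ℝ)|)
      atTop (𝓝 0) := by
  have : NeZero q := ⟨by omega⟩
  refine Metric.tendsto_nhds.2 fun ε hε => ?_
  filter_upwards [eventually_ratioLE_treePartition hq hd hβ₀ hle hβ hβ₁ hcond (1 + ε / 2)
    (by linarith)] with n hn
  rw [Real.dist_0_eq_abs, abs_of_nonneg (Real.iSup_nonneg fun τ => abs_nonneg _)]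
  refine (ciSup_le fun τ => ?_).trans_lt (half_lt_self hε)
  calc |condRootProb q d n β τ c - 1 / (q : ℝ)|
      ≤ (1 + ε / 2 - 1) / q := by
        simpa only [condRootProb_eq_div, Fintype.card_fin] using (hn τ).abs_div_sum_sub_le c
    _ = ε / 2 / q := by rw [add_sub_cancel_left]
    _ ≤ ε / 2 := div_le_self (half_pos hε).le (Nat.one_le_cast.2 (by omega))

/-- If the pair `(q,d)` satisfies Condition `𝒞(α)` for every `α > 1` (with
`β_* = max{1 - q/(d+1), 0}`), then the `q`-state Potts model has uniqueness
on the infinite `d`-ary tree for every `β ∈ (0,1)` with `β ≥ β_*`. -/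
theorem potts_uniqueness_of_condition (q d : ℕ) (hq : 3 ≤ q) (hd : 2 ≤ d)
    (hcond : ∀ α : ℝ, 1 < α → ∀ c₁ c₂ : Fin q, ∀ p : Fin d → Fin q → ℝ,
      (∀ k, p k ∈ exSet q c₂ α) →
      hfun q d (max (1 - (q : ℝ) / ((d : ℝ) + 1)) 0) c₁ c₂ p < α ^ (1 / (d : ℝ)))
    (β : ℝ) (hβ0 : 0 < β) (hβ1 : β < 1)
    (hβstar : max (1 - (q : ℝ) / ((d : ℝ) + 1)) 0 ≤ β) :
    ∀ c : Fin q,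
      Filter.limsup
        (fun n : ℕ =>
          ⨆ τ : (Fin n → Fin d) → Fin q,
            |condRootProb q d n β τ c - 1 / (q : ℝ)|)
        Filter.atTop = 0 := fun c =>
  (potts_uniqueness_of_condition_general (by omega) (by omega) (le_max_right _ _) hβstar hβ0
    hβ1.le hcond c).limsup_eq
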